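/- If a nonnegative sequence (a_k)_{k=0}^∞ is a TP_∞-preserver, then for every c > 0 with c ≠ 1, the sequence ( ((c^{k+1} − 1)/(c − 1)) · a_k )_{k=0}^∞ (the coefficient sequence of (A(z) − c·A(cz))/(1 − c), where A(z) = ∑ a_k z^k) is a totally positive sequence. -/

import Mathlib

/-- A real sequence `(a_k)` is totally positive (TP_∞) if all finite minors of the
infinite Toeplitz matrix `(a_{j-i})` (with `a_k = 0` for `k < 0`) are nonnegative. -/
def IsTotallyPositive (a : ℕ → ℝ) : Prop :=
  ∀ (n : ℕ) (i j : Fin n → ℕ), StrictMono i → StrictMono j →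
    0 ≤ (Matrix.of fun p q : Fin n => if i p ≤ j q then a (j q - i p) else 0).det

/-- A real sequence is `m`-times positive (TP_m) if all such minors of order at most `m`
are nonnegative. -/
def IsMultiplyPositive (m : ℕ) (a : ℕ → ℝ) : Prop :=
  ∀ (n : ℕ), n ≤ m → ∀ (i j : Fin n → ℕ), StrictMono i → StrictMono j →
    0 ≤ (Matrix.of fun p q : Fin n => if i p ≤ j q then a (j q - i p) else 0).det

/-- A nonnegative sequence `(a_k)` is a TP_∞-preserver if for every totally positive
sequence `(b_k)`, the sequence `(a_k b_k)` is totally positive. -/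
def IsTPPreserver (a : ℕ → ℝ) : Prop :=
  ∀ b : ℕ → ℝ, IsTotallyPositive b → IsTotallyPositive (fun k => a k * b k)

lemma tp_delta : IsTotallyPositive (fun k => if k = 0 then (1 : ℝ) else 0) := by
  intro n i j hi hj
  by_contra hlt
  push Not at hlt
  have hne := hlt.ne
  rw [Matrix.det_apply] at hne
  obtain ⟨σ, -, hσ⟩ := Finset.exists_ne_zero_of_sum_ne_zero hne
  have hprod : ∀ p, i (σ p) = j p := by
    intro p
    by_contra hp
    apply hσ
    rw [Finset.prod_eq_zero (Finset.mem_univ p), smul_zero]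
    simp only [Matrix.of_apply]
    split_ifs with h1 h2
    · omega
    · rfl
    · rfl
  have hij : i = j := by
    apply (StrictMono.range_inj hi hj).1
    have : j = i ∘ σ := by
      funext p
      exact (hprod p).symm
    rw [this, σ.surjective.range_comp]
  subst hij
  have h1 : (Matrix.of fun p q : Fin n =>
      if i p ≤ i q then (if i q - i p = 0 then (1 : ℝ) else 0) else 0) = 1 := by
    ext p q
    rw [Matrix.one_apply, Matrix.of_apply]
    by_cases hpq : p = q
    · simp [hpq]
    · have : i p ≠ i q := fun h => hpq (hi.injective h)
      rw [if_neg hpq]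
      split_ifs with h1 h2
      · omega
      · rfl
      · rfl
  rw [h1, Matrix.det_one] at hlt
  linarith

lemma sum_step (c : ℝ) (X W : ℕ → ℝ) (hs : ∀ k, W (k + 1) = X (k + 1) + c * W k) (a d : ℕ) :
    W (a + d) = ∑ k ∈ Finset.Ico (a + 1) (a + d + 1), c ^ (a + d - k) * X k + c ^ d * W a := by
  induction d with
  | zero => simp
  | succ d ih =>
    rw [← add_assoc, hs, ih, Finset.sum_Ico_succ_top (by omega : a + 1 ≤ a + d + 1), mul_add,
      Finset.mul_sum]
    have : ∑ k ∈ Finset.Ico (a + 1) (a + d + 1), c * (c ^ (a + d - k) * X k)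
        = ∑ k ∈ Finset.Ico (a + 1) (a + d + 1), c ^ (a + d + 1 - k) * X k := by
      apply Finset.sum_congr rfl
      intro k hk
      rw [Finset.mem_Ico] at hk
      rw [show a + d + 1 - k = (a + d - k) + 1 by omega, pow_succ]
      ring
    rw [this]
    simp
    ring

lemma sum_zero (c : ℝ) (X W : ℕ → ℝ) (h0 : W 0 = X 0)
    (hs : ∀ k, W (k + 1) = X (k + 1) + c * W k) (d : ℕ) :
    W d = ∑ k ∈ Finset.Ico 0 (d + 1), c ^ (d - k) * X k := by
  have h := sum_step c X W hs 0 d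
  rw [Finset.sum_eq_sum_Ico_succ_bot (by omega : 0 < d + 1)]
  simp only [zero_add] at h ⊢
  rw [h, h0]
  simp
  ring

lemma tp_step (c : ℝ) (hc : 0 ≤ c) (x y : ℕ → ℝ) (hx : IsTotallyPositive x)
    (h0 : y 0 = x 0) (hs : ∀ k, y (k + 1) = x (k + 1) + c * y k) : IsTotallyPositive y := by
  intro n i j hi hj
  cases n with
  | zero => simp
  | succ n =>
  set X : Fin (n + 1) → ℕ → ℝ := fun p k => if i p ≤ k then x (k - i p) else 0 with hX
  set W : Fin (n + 1) → ℕ → ℝ := fun p k => if i p ≤ k then y (k - i p) else 0 with hW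
  have hW0 : ∀ p, W p 0 = X p 0 := by
    intro p
    simp only [hX, hW]
    split_ifs <;> simp [h0]
  have hWs : ∀ p k, W p (k + 1) = X p (k + 1) + c * W p k := by
    intro p k
    simp only [hX, hW]
    by_cases h1 : i p ≤ k
    · rw [if_pos h1, if_pos (by omega), if_pos (by omega),
        show k + 1 - i p = (k - i p) + 1 by omega, hs]
    · by_cases h2 : i p = k + 1
      · rw [if_neg h1, if_pos (by omega), if_pos (by omega), h2]
        simp [h0]
      · rw [if_neg h1, if_neg (by omega), if_neg (by omega)]
        simp
  let s : Fin (n + 1) → ℕ := Fin.cons 0 (fun q => j q.castSucc + 1)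
  let S : Fin (n + 1) → Finset ℕ := fun q => Finset.Ico (s q) (j q + 1)
  let g : Fin (n + 1) → ℕ → (Fin (n + 1) → ℝ) := fun q k => c ^ (j q - k) • fun p => X p k
  have hdet : (Matrix.of fun p q : Fin (n + 1) => W p (j q)).det
      = (Matrix.of fun p q : Fin (n + 1) => ∑ k ∈ S q, g q k p).det := by
    apply Matrix.det_eq_of_forall_col_eq_smul_add_pred
      (fun q => c ^ (j q.succ - j q.castSucc))
    · intro p
      exact sum_zero c (X p) (W p) (hW0 p) (hWs p) (j 0)
    · intro p q
      have hlt : j q.castSucc < j q.succ := hj (Fin.castSucc_lt_succ)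
      have h := sum_step c (X p) (W p) (hWs p) (j q.castSucc) (j q.succ - j q.castSucc)
      rw [Nat.add_sub_cancel' hlt.le] at h
      exact h
  change 0 ≤ (Matrix.of fun p q : Fin (n + 1) => W p (j q)).det
  rw [hdet, ← Matrix.det_transpose]
  have hm : (Matrix.of fun p q : Fin (n + 1) => ∑ k ∈ S q, g q k p).transpose.det
      = (Matrix.detRowAlternating (R := ℝ) (n := Fin (n + 1))).toMultilinearMap
        (fun q => ∑ k ∈ S q, g q k) := by
    change Matrix.det _ = Matrix.det _
    congr 1
    ext q p
    simp [Matrix.transpose_apply, Finset.sum_apply]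
  rw [hm, MultilinearMap.map_sum_finset]
  apply Finset.sum_nonneg
  intro r hr
  rw [Fintype.mem_piFinset] at hr
  simp only [g]
  rw [MultilinearMap.map_smul_univ]
  apply smul_nonneg (Finset.prod_nonneg fun q _ => pow_nonneg hc _)
  have hr' : StrictMono r := by
    rw [Fin.strictMono_iff_lt_succ]
    intro q
    have h1 := hr q.castSucc
    have h2 := hr q.succ
    simp only [S, s, Finset.mem_Ico, Fin.cons_succ] at h1 h2
    omega
  have h := hx (n + 1) i r hi hr'
  rw [← Matrix.det_transpose] at h
  exact h

/-- if `a` is a TP_∞-preserver then `((c^(k+1)-1)/(c-1) * a_k)` is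
totally positive, for every `c > 0`, `c ≠ 1`. -/
theorem stmt_7 (a : ℕ → ℝ) (ha : ∀ k, 0 ≤ a k) (hpres : IsTPPreserver a) :
    ∀ c : ℝ, 0 < c → c ≠ 1 →
      IsTotallyPositive (fun k => (c ^ (k + 1) - 1) / (c - 1) * a k) := by
  intro c hc hc1
  have hc1' : c - 1 ≠ 0 := sub_ne_zero.mpr hc1
  have hone : IsTotallyPositive (fun _ => (1 : ℝ)) :=
    tp_step 1 zero_le_one _ _ tp_delta (by simp) (by simp)
  have hb : IsTotallyPositive (fun k => (c ^ (k + 1) - 1) / (c - 1)) := by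
    refine tp_step c hc.le _ _ hone ?_ ?_
    · simp [div_self hc1']
    · intro k
      field_simp
      ring
  have h := hpres _ hb
  have he : (fun k => (c ^ (k + 1) - 1) / (c - 1) * a k)
      = fun k => a k * ((c ^ (k + 1) - 1) / (c - 1)) := by
    funext k
    ring
  rw [he]
  exact h
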